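/- arXiv:2402.12588 — 3 statements merged into one kernel-verified Lean document; each statement's English description precedes it below -/
import Mathlib

section
/- Let G be an abelian group, let D be a divisible subgroup of G, and let N be a positive integer such that N·g ∈ D for every g ∈ G (i.e. the quotient G/D is killed by N). Suppose moreover that the N-torsion subgroup {g ∈ G : N·g = 0} is finite. Then G is the internal direct sum of D and a finite subgroup; in particular, G is the direct sum of a divisible group and a finite group. -/
/-- If `D` is a divisible subgroup of an abelian group `G` with `G/D` killed by a
positive integer `N`, and the `N`-torsion subgroup of `G` is finite, then `G` is the
internal direct sum of `D` and a finite subgroup. -/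
theorem direct_sum_divisible_finite_of_bounded_quotient
    {G : Type*} [AddCommGroup G] (D : AddSubgroup G)
    (hD : ∀ d ∈ D, ∀ n : ℕ, 0 < n → ∃ d' ∈ D, n • d' = d)
    (N : ℕ) (hN : 0 < N) (hquot : ∀ g : G, N • g ∈ D)
    (htors : {g : G | N • g = 0}.Finite) :
    ∃ F : AddSubgroup G, (F : Set G).Finite ∧ D ⊓ F = ⊥ ∧ D ⊔ F = ⊤ := by
  have hsurj : ∀ {n : ℤ}, n ≠ 0 → Function.Surjective (fun a : D => n • a) := by
    intro n hn d
    obtain ⟨d', hd', h⟩ := hD d d.2 n.natAbs (Int.natAbs_pos.mpr hn)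
    rcases Int.natAbs_eq n with h1 | h1
    · refine ⟨⟨d', hd'⟩, Subtype.ext ?_⟩
      simp only [AddSubgroup.coe_zsmul]
      rw [h1, natCast_zsmul, h]
    · refine ⟨-⟨d', hd'⟩, Subtype.ext ?_⟩
      simp only [AddSubgroup.coe_zsmul, AddSubgroup.coe_neg]
      rw [h1, neg_smul, smul_neg, neg_neg, natCast_zsmul, h]
  letI : DivisibleBy D ℤ := divisibleByOfSMulRightSurj D ℤ hsurj
  obtain ⟨p, hp⟩ := (Module.Baer.of_divisible (A := D)).extension_property_addMonoidHom
    D.subtype D.subtype_injective (AddMonoidHom.id D)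
  have hp' : ∀ d : D, p d = d := fun d => DFunLike.congr_fun hp d
  have hinf : D ⊓ p.ker = ⊥ := by
    rw [eq_bot_iff]
    rintro x ⟨hx, hk⟩
    have h1 := hp' ⟨x, hx⟩
    have h2 : p x = 0 := hk
    have h3 : (⟨x, hx⟩ : D) = 0 := h1.symm.trans h2
    exact congrArg Subtype.val h3
  refine ⟨p.ker, htors.subset ?_, hinf, ?_⟩
  · intro x hx
    have : N • x ∈ D ⊓ p.ker := ⟨hquot x, p.ker.nsmul_mem hx N⟩
    rw [hinf] at this
    exact this
  · rw [eq_top_iff]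
    intro x _
    refine AddSubgroup.mem_sup.mpr ⟨p x, (p x).2, x - p x, ?_, by abel⟩
    rw [AddMonoidHom.mem_ker, map_sub, hp', sub_self]
end

section
/- Let f : A → B and g : B → A be homomorphisms of abelian groups such that f ∘ g equals multiplication by a positive integer m on B. Suppose A is the internal direct sum of a divisible subgroup D_A and a subgroup F_A with N·x = 0 for all x ∈ F_A, for some positive integer N, and suppose the (m·N)-torsion subgroup {b ∈ B : (m·N)·b = 0} of B is finite. Then B is the internal direct sum of a divisible subgroup and a finite subgroup. -/
/-- Transfer of the divisible-plus-finite decomposition along maps whose composite is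
multiplication by `m`: if `A = D_A ⊕ F_A` with `D_A` divisible and `F_A` killed by `N`,
and the `(m·N)`-torsion of `B` is finite, then `B` is the internal direct sum of a
divisible subgroup and a finite subgroup. -/
theorem direct_sum_divisible_finite_transfer
    {A B : Type*} [AddCommGroup A] [AddCommGroup B]
    (f : A →+ B) (g : B →+ A) (m : ℕ) (hm : 0 < m)
    (hfg : ∀ b : B, f (g b) = m • b)
    (DA FA : AddSubgroup A)
    (hdiv : ∀ d ∈ DA, ∀ n : ℕ, 0 < n → ∃ d' ∈ DA, n • d' = d)
    (N : ℕ) (hN : 0 < N) (hFA : ∀ x ∈ FA, N • x = 0)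
    (hinf : DA ⊓ FA = ⊥) (hsup : DA ⊔ FA = ⊤)
    (htors : {b : B | (m * N) • b = 0}.Finite) :
    ∃ DB FB : AddSubgroup B,
      (∀ d ∈ DB, ∀ n : ℕ, 0 < n → ∃ d' ∈ DB, n • d' = d) ∧
      (FB : Set B).Finite ∧ DB ⊓ FB = ⊥ ∧ DB ⊔ FB = ⊤ := by
  classical
  have hD : ∀ d ∈ DA.map f, ∀ n : ℕ, 0 < n → ∃ d' ∈ DA.map f, n • d' = d := by
    rintro _ ⟨a, ha, rfl⟩ n hn
    obtain ⟨d', hd', h⟩ := hdiv a ha n hn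
    exact ⟨f d', ⟨d', hd', rfl⟩, by rw [← map_nsmul, h]⟩
  have hmN : ∀ b : B, (m * N) • b ∈ DA.map f := by
    intro b
    have hb : g b ∈ DA ⊔ FA := by rw [hsup]; trivial
    obtain ⟨d, hd, x, hx, h⟩ := AddSubgroup.mem_sup.1 hb
    refine ⟨N • d, DA.nsmul_mem hd N, ?_⟩
    rw [mul_comm, mul_nsmul', ← hfg, ← map_nsmul, ← h, nsmul_add, hFA x hx, add_zero]
  let DB : AddSubgroup B := DA.map f
  have hsurj : ∀ {n : ℕ}, n ≠ 0 → Function.Surjective (fun a : DB => n • a) := by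
    rintro n hn ⟨d, hd⟩
    obtain ⟨d', hd', h⟩ := hD d hd n (Nat.pos_of_ne_zero hn)
    exact ⟨⟨d', hd'⟩, Subtype.ext h⟩
  letI : DivisibleBy DB ℕ := divisibleByOfSMulRightSurj DB ℕ hsurj
  letI : DivisibleBy DB ℤ := AddGroup.divisibleByIntOfDivisibleByNat DB
  obtain ⟨r, hr⟩ := (Module.Baer.of_divisible DB).extension_property
    DB.subtype.toIntLinearMap Subtype.val_injective LinearMap.id
  have hr' : ∀ x : DB, r (x : B) = x := fun x => LinearMap.congr_fun hr x
  have hinter : ∀ x ∈ DA.map f, r x = 0 → x = 0 := by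
    intro x hx h
    have h2 := hr' ⟨x, hx⟩
    rw [h] at h2
    exact (congrArg Subtype.val h2).symm
  refine ⟨DB, r.toAddMonoidHom.ker, hD, ?_, ?_, ?_⟩
  · refine htors.subset fun x hx => ?_
    have hx : r x = 0 := hx
    exact hinter _ (hmN x) (by rw [map_nsmul, hx, nsmul_zero])
  · rw [eq_bot_iff]
    rintro x ⟨h1, h2⟩
    exact hinter x h1 h2
  · rw [eq_top_iff]
    intro x _
    refine AddSubgroup.mem_sup.2 ⟨r x, (r x).2, x - r x, ?_, by abel⟩
    change r (x - r x) = 0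
    rw [map_sub, hr', sub_self]
end

section
/- Let G be an abelian group and H a subgroup of G such that m·g ∈ H for every g ∈ G, for some positive integer m. Suppose H is the internal direct sum of a divisible subgroup D and a torsion subgroup. Then for every g ∈ G there is a positive integer n with n·g ∈ D; consequently G is the internal direct sum of D and a torsion subgroup, i.e. G is the direct sum of a divisible group and a torsion group. -/
/-- If `H` is a subgroup of `G` with `m·g ∈ H` for all `g` (some `m > 0`), and `H` is
the internal direct sum of a divisible subgroup `D` and a torsion subgroup `T`, then
every element of `G` has a multiple in `D`, and `G` is the internal direct sum of `D`
and a torsion subgroup. -/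
theorem direct_sum_divisible_torsion_of_bounded_index_subgroup
    {G : Type*} [AddCommGroup G] (H : AddSubgroup G)
    (m : ℕ) (hm : 0 < m) (hH : ∀ g : G, m • g ∈ H)
    (D T : AddSubgroup G)
    (hdiv : ∀ d ∈ D, ∀ n : ℕ, 0 < n → ∃ d' ∈ D, n • d' = d)
    (htor : ∀ t ∈ T, ∃ n : ℕ, 0 < n ∧ n • t = 0)
    (hinf : D ⊓ T = ⊥) (hsup : D ⊔ T = H) :
    (∀ g : G, ∃ n : ℕ, 0 < n ∧ n • g ∈ D) ∧
      ∃ T' : AddSubgroup G, (∀ t ∈ T', ∃ n : ℕ, 0 < n ∧ n • t = 0) ∧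
        D ⊓ T' = ⊥ ∧ D ⊔ T' = ⊤ := by
  have h1 : ∀ g : G, ∃ n : ℕ, 0 < n ∧ n • g ∈ D := by
    intro g
    have hg := hH g
    rw [← hsup, AddSubgroup.mem_sup] at hg
    obtain ⟨d, hd, t, ht, e⟩ := hg
    obtain ⟨k, hk, hkt⟩ := htor t ht
    refine ⟨k * m, Nat.mul_pos hk hm, ?_⟩
    rw [mul_smul, ← e, smul_add, hkt, add_zero]
    exact D.nsmul_mem hd k
  refine ⟨h1, ?_⟩
  have hsurj : ∀ {n : ℤ}, n ≠ 0 → Function.Surjective (fun a : D => n • a) := by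
    intro n hn d
    obtain ⟨d', hd', e⟩ := hdiv d.1 d.2 n.natAbs (Int.natAbs_pos.mpr hn)
    rcases Int.natAbs_eq n with h | h
    · refine ⟨⟨d', hd'⟩, Subtype.ext ?_⟩
      change n • d' = d.1
      rw [h, natCast_zsmul, e]
    · refine ⟨-⟨d', hd'⟩, Subtype.ext ?_⟩
      change n • (-d') = d.1
      rw [h, neg_smul, smul_neg, neg_neg, natCast_zsmul, e]
  letI : DivisibleBy D ℤ := divisibleByOfSMulRightSurj D ℤ hsurj
  obtain ⟨f, hf⟩ := (Module.Baer.of_divisible D).extension_property_addMonoidHom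
    D.subtype D.subtype_injective (AddMonoidHom.id D)
  have hf' : ∀ d : D, f d.1 = d := fun d => DFunLike.congr_fun hf d
  refine ⟨f.ker, ?_, ?_, ?_⟩
  · intro t ht
    obtain ⟨n, hn, hnt⟩ := h1 t
    refine ⟨n, hn, ?_⟩
    have h := hf' ⟨_, hnt⟩
    have ht' : f t = 0 := ht
    simp only [map_nsmul, ht', smul_zero] at h
    exact (congrArg Subtype.val h).symm
  · rw [eq_bot_iff]
    rintro x ⟨hx, hk⟩
    have hk' : f x = 0 := hk
    have h := hf' ⟨x, hx⟩
    simp only [hk'] at h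
    exact (congrArg Subtype.val h).symm
  · rw [eq_top_iff]
    intro x _
    rw [AddSubgroup.mem_sup]
    refine ⟨f x, (f x).2, x - f x, ?_, by abel⟩
    change f (x - f x) = 0
    rw [map_sub, hf', sub_self]
end
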